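/- Let η : ℝ × ℝ³ → ℝ³ be a C² map such that for every (t,x) the spatial Jacobian ∇η(t,x) (entries ∂_l η_i) is invertible, let v := ∂_t η, A := (∇η)⁻¹, and define ∂_i^η g := ∑_k A_{ki} ∂_k g (spatial derivatives). Then for every C² function f : ℝ × ℝ³ → ℝ, every index i, and every (t,x): ∂_t(∂_i^η f)(t,x) − ∂_i^η(∂_t f)(t,x) = −∑_{l=1}^{3} (∂_i^η v_l)(t,x) · (∂_l^η f)(t,x). -/

import Mathlib

open scoped Matrix BigOperators

/-- Spatial partial derivative `∂_l f` of a scalar function on `ℝ × ℝ³`. -/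
noncomputable def pdx (f : ℝ × (Fin 3 → ℝ) → ℝ) (l : Fin 3) (p : ℝ × (Fin 3 → ℝ)) : ℝ :=
  fderiv ℝ (fun y => f (p.1, y)) p.2 (Pi.single l 1)

/-- Time derivative `∂_t f` of a scalar function on `ℝ × ℝ³`. -/
noncomputable def pdt (f : ℝ × (Fin 3 → ℝ) → ℝ) (p : ℝ × (Fin 3 → ℝ)) : ℝ :=
  deriv (fun s => f (s, p.2)) p.1

/-- Spatial Jacobian matrix `∇η` with entries `(∇η)_{il} = ∂_l η_i`. -/
noncomputable def Jac (η : ℝ × (Fin 3 → ℝ) → Fin 3 → ℝ) (p : ℝ × (Fin 3 → ℝ)) :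
    Matrix (Fin 3) (Fin 3) ℝ :=
  Matrix.of fun i l => pdx (fun q => η q i) l p

/-- Transformed derivative `∂_i^η g = ∑_k A_{ki} ∂_k g`, where `A = (∇η)⁻¹`. -/
noncomputable def Deta (η : ℝ × (Fin 3 → ℝ) → Fin 3 → ℝ) (f : ℝ × (Fin 3 → ℝ) → ℝ)
    (i : Fin 3) (p : ℝ × (Fin 3 → ℝ)) : ℝ :=
  ∑ k, (Jac η p)⁻¹ k i * pdx f k p

theorem pdx_eq_aux (g : ℝ × (Fin 3 → ℝ) → ℝ) (hg : Differentiable ℝ g) (k : Fin 3)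
    (p : ℝ × (Fin 3 → ℝ)) : pdx g k p = fderiv ℝ g p (0, Pi.single k 1) := by
  have h1 : HasFDerivAt (fun y : Fin 3 → ℝ => (p.1, y))
      (ContinuousLinearMap.inr ℝ ℝ (Fin 3 → ℝ)) p.2 := hasFDerivAt_prodMk_right p.1 p.2
  have h2 := (hg (p.1, p.2)).hasFDerivAt.comp p.2 h1
  have h3 := h2.fderiv
  unfold pdx
  simp only [Function.comp_def] at h3
  rw [h3]
  simp

theorem hasDerivAt_time_aux {F : Type*} [NormedAddCommGroup F] [NormedSpace ℝ F]
    (g : ℝ × (Fin 3 → ℝ) → F) (hg : Differentiable ℝ g)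
    (p : ℝ × (Fin 3 → ℝ)) : HasDerivAt (fun s => g (s, p.2)) (fderiv ℝ g p (1, 0)) p.1 := by
  have h1 : HasDerivAt (fun s : ℝ => (s, p.2)) ((1 : ℝ), (0 : Fin 3 → ℝ)) p.1 :=
    (hasDerivAt_id p.1).prodMk (hasDerivAt_const p.1 p.2)
  exact (hg (p.1, p.2)).hasFDerivAt.comp_hasDerivAt p.1 h1

theorem key_aux (g : ℝ × (Fin 3 → ℝ) → ℝ) (hg : ContDiff ℝ 2 g) (k : Fin 3)
    (p : ℝ × (Fin 3 → ℝ)) :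
    HasDerivAt (fun s => pdx g k (s, p.2)) (pdx (fun q => pdt g q) k p) p.1 := by
  have hd : Differentiable ℝ g := hg.differentiable (by norm_num)
  have hdd : Differentiable ℝ (fderiv ℝ g) :=
    (hg.fderiv_right (m := 1) (by norm_num)).differentiable (by norm_num)
  have e1 : (fun q => pdt g q) = fun q => fderiv ℝ g q (1, 0) := by
    funext q
    exact (hasDerivAt_time_aux g hd q).deriv
  have hap : ∀ w : ℝ × (Fin 3 → ℝ), ∀ q, HasFDerivAt (fun q => fderiv ℝ g q w)
      ((fderiv ℝ (fderiv ℝ g) q).flip w) q := by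
    intro w q
    have := (hdd q).hasFDerivAt.clm_apply (hasFDerivAt_const w q)
    simpa using this
  have e2 : pdx g k = fun q => fderiv ℝ g q (0, Pi.single k 1) := by
    funext q
    exact pdx_eq_aux g hd k q
  rw [e1, e2, pdx_eq_aux _ (fun q => (hap _ q).differentiableAt), (hap _ p).fderiv]
  have h := hasDerivAt_time_aux _ (fun q => (hap (0, Pi.single k 1) q).differentiableAt) p
  rw [(hap _ p).fderiv] at h
  have hs : IsSymmSndFDerivAt ℝ g p := by
    apply hg.contDiffAt.isSymmSndFDerivAt
    simp
  simp only [ContinuousLinearMap.flip_apply] at h ⊢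
  rw [hs.eq]
  exact h

theorem inv_aux (J : ℝ → Matrix (Fin 3) (Fin 3) ℝ) (J' : Matrix (Fin 3) (Fin 3) ℝ) (t : ℝ)
    (hJ : ∀ i j, HasDerivAt (fun s => J s i j) (J' i j) t) (hu : ∀ s, IsUnit (J s)) (k i : Fin 3) :
    HasDerivAt (fun s => (J s)⁻¹ k i) ((-((J t)⁻¹ * J' * (J t)⁻¹)) k i) t := by
  have hdet : ∀ s, (J s).det ≠ 0 := fun s =>
    ((Matrix.isUnit_iff_isUnit_det _).1 (hu s)).ne_zero
  have hdJ : ∀ i j, DifferentiableAt ℝ (fun s => J s i j) t := fun i j => (hJ i j).differentiableAt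
  have hdd : DifferentiableAt ℝ (fun s => (J s).det) t := by
    simp only [Matrix.det_fin_three]
    fun_prop
  have hdA : ∀ k i, DifferentiableAt ℝ (fun s => (J s)⁻¹ k i) t := by
    intro k i
    have : (fun s => (J s)⁻¹ k i) = fun s => ((J s).det)⁻¹ * (J s).adjugate k i := by
      funext s
      simp [Matrix.inv_def]
    rw [this]
    refine (hdd.inv (hdet t)).mul ?_
    simp only [Matrix.adjugate_fin_three]
    fin_cases k <;> fin_cases i <;> simp <;> fun_prop
  set A' : Matrix (Fin 3) (Fin 3) ℝ := Matrix.of fun k i => deriv (fun s => (J s)⁻¹ k i) t with hA'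
  have hA : ∀ k i, HasDerivAt (fun s => (J s)⁻¹ k i) (A' k i) t := fun k i => (hdA k i).hasDerivAt
  have hz : J' * (J t)⁻¹ + J t * A' = 0 := by
    ext a b
    have h1 : HasDerivAt (fun s => ∑ c, J s a c * (J s)⁻¹ c b)
        (∑ c, (J' a c * (J t)⁻¹ c b + J t a c * A' c b)) t :=
      HasDerivAt.fun_sum fun c _ => (hJ a c).mul (hA c b)
    have h2 : (fun s => ∑ c, J s a c * (J s)⁻¹ c b) = fun _ => (1 : Matrix (Fin 3) (Fin 3) ℝ) a b := by
      funext s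
      rw [← Matrix.mul_apply, Matrix.mul_nonsing_inv _ (hdet s).isUnit]
    rw [h2] at h1
    have h3 := h1.unique (hasDerivAt_const _ _)
    simpa [Matrix.mul_apply, Finset.sum_add_distrib] using h3
  have hf : A' = -((J t)⁻¹ * J' * (J t)⁻¹) := by
    have h4 : J t * A' = -(J' * (J t)⁻¹) := by
      rw [add_comm] at hz
      exact eq_neg_of_add_eq_zero_left hz
    have h5 : (J t)⁻¹ * (J t * A') = A' := Matrix.nonsing_inv_mul_cancel_left _ _ (hdet t).isUnit
    rw [← h5, h4, Matrix.mul_neg, Matrix.mul_assoc]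
  rw [← hf]
  exact hA k i

/-- First commutator identity of Lemma 2.1:
`[∂_t, ∂_i^η] f = −(∂_i^η v_l) ∂_l^η f` (summation over `l`), where `v = ∂_t η`. -/
theorem commutator_time_Deta
    (η : ℝ × (Fin 3 → ℝ) → Fin 3 → ℝ) (hη : ContDiff ℝ 2 η)
    (hinv : ∀ p, IsUnit (Jac η p))
    (f : ℝ × (Fin 3 → ℝ) → ℝ) (hf : ContDiff ℝ 2 f)
    (i : Fin 3) (p : ℝ × (Fin 3 → ℝ)) :
    pdt (fun q => Deta η f i q) p - Deta η (fun q => pdt f q) i p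
      = -∑ l, Deta η (fun q => pdt (fun r => η r l) q) i p * Deta η f l p := by
  have hηl : ∀ l, ContDiff ℝ 2 (fun r => η r l) := fun l => contDiff_pi.1 hη l
  set J' : Matrix (Fin 3) (Fin 3) ℝ :=
    Matrix.of fun l k => pdx (fun q => pdt (fun r => η r l) q) k p with hJ'
  have hA := inv_aux (fun s => Jac η (s, p.2)) J' p.1
    (fun a b => key_aux _ (hηl a) b p) (fun s => hinv _)
  have h1 : HasDerivAt (fun s => Deta η f i (s, p.2))
      (∑ k, ((-((Jac η p)⁻¹ * J' * (Jac η p)⁻¹)) k i * pdx f k p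
        + (Jac η p)⁻¹ k i * pdx (fun q => pdt f q) k p)) p.1 :=
    HasDerivAt.fun_sum fun k _ => (hA k i).mul (key_aux f hf k p)
  have h2 : pdt (fun q => Deta η f i q) p = _ := h1.deriv
  rw [h2]
  have h3 : ∀ l k, pdx (fun q => pdt (fun r => η r l) q) k p = J' l k := fun _ _ => rfl
  simp only [Deta, h3]
  simp only [Matrix.neg_apply, Matrix.mul_apply, Fin.sum_univ_three]
  ring
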